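/- arXiv:1311.7441 — 2 statements merged into one kernel-verified Lean document; each statement's English description precedes it below -/
import Mathlib

section
/- Let H be a Hopf algebra over a field k, let D : H → H be a bialgebra automorphism with D^m = id where m is odd, let q ∈ k be a primitive m-th root of unity and r ∈ k an element of multiplicative order m with r² = q. Suppose H is the direct sum of the eigenspaces E_{D,q^i}, 0 ≤ i ≤ m-1. Then the k-linear map σ : H → H acting as multiplication by r^i on E_{D,q^i} for each i is a bialgebra automorphism of H satisfying σ ∘ σ = D. -/
open Coalgebra HopfAlgebra TensorProduct

/-!
Since `m = 2 t + 1` is odd, squaring is invertible on the solutions of `ν ^ m = 1`, with inverse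
`μ ↦ μ ^ (t + 1)`. Hence a linear map that acts by `ν` on the eigenspace of `D` for `ν ^ 2` acts
there as `D ^ (t + 1)`. If these eigenspaces span, the map is therefore a power of the bialgebra
endomorphism `D`, and `D ^ m = 1`, so it is invertible and squares to `D ^ (m + 1) = D`.
-/

section LinearAlgebra

variable {R M N : Type*} {ι : Sort*}

theorem linearMap_ext_of_iSup_eq_top [Semiring R] [AddCommMonoid M] [AddCommMonoid N]
    [Module R M] [Module R N] {p : ι → Submodule R M} (hp : ⨆ i, p i = ⊤) {f g : M →ₗ[R] N}
    (hfg : ∀ i, Set.EqOn f g (p i)) : f = g :=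
  LinearMap.eqLocus_eq_top.mp <| top_unique <|
    hp.ge.trans <| iSup_le fun i => LinearMap.le_eqLocus.mpr (hfg i)

theorem pow_apply_of_apply_eq_smul [Semiring R] [AddCommMonoid M] [Module R M]
    {f : Module.End R M} {μ : R} {x : M} (hx : f x = μ • x) (n : ℕ) :
    (f ^ n) x = μ ^ n • x := by
  induction n with
  | zero => rw [pow_zero, pow_zero, Module.End.one_apply, one_smul]
  | succ n ih => rw [pow_succ', Module.End.mul_apply, ih, map_smul, hx, smul_smul, pow_succ]

theorem eq_pow_of_iSup_eigenspace_eq_top [CommRing R] [AddCommGroup M] [Module R M]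
    {f g : Module.End R M} {μ : ι → R} (hspan : ⨆ i, f.eigenspace (μ i) = ⊤) {n : ℕ}
    (hg : ∀ i, ∀ x ∈ f.eigenspace (μ i), g x = μ i ^ n • x) : g = f ^ n :=
  linearMap_ext_of_iSup_eq_top hspan fun i x hx =>
    (hg i x hx).trans (pow_apply_of_apply_eq_smul (Module.End.mem_eigenspace_iff.mp hx) n).symm

end LinearAlgebra

section Bialgebra

variable {R A B : Type*}

/-- The bialgebra homomorphism underlying a linear map that respects the unit, multiplication,
counit and comultiplication, all four conditions being stated elementwise. -/
def bialgHomOfLinearMap [CommSemiring R] [Semiring A] [Bialgebra R A] [Semiring B] [Bialgebra R B]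
    (f : A →ₗ[R] B) (map_one : f 1 = 1) (map_mul : ∀ x y, f (x * y) = f x * f y)
    (map_counit : ∀ x, counit (R := R) (f x) = counit (R := R) x)
    (map_comul : ∀ x, comul (R := R) (f x) = TensorProduct.map f f (comul (R := R) x)) :
    A →ₐc[R] B where
  toLinearMap := f
  counit_comp := LinearMap.ext map_counit
  map_comp_comul := LinearMap.ext fun x => (map_comul x).symm
  map_one' := map_one
  map_mul' := map_mul

theorem bialgHom_toLinearMap_pow [CommSemiring R] [Semiring A] [Bialgebra R A]
    (f : A →ₐc[R] A) (n : ℕ) :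
    ((f ^ n : A →ₐc[R] A) : A →ₗ[R] A) = (f : Module.End R A) ^ n :=
  map_pow
    ({ toFun := fun g => (g : Module.End R A)
       map_one' := rfl
       map_mul' := fun _ _ => rfl } : (A →ₐc[R] A) →* Module.End R A) f n

theorem exists_bialgEquiv_of_isUnit [CommSemiring R] [Semiring A] [Bialgebra R A]
    {f : A →ₐc[R] A} (hf : IsUnit f) : ∃ e : A ≃ₐc[R] A, (e : A →ₐc[R] A) = f := by
  obtain ⟨u, rfl⟩ := hf
  exact ⟨BialgEquiv.ofBialgHom u ↑u⁻¹ u.mul_inv u.inv_mul, rfl⟩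

theorem bialgHom_pow_eq_one_of_iSup_eigenspace_eq_top [CommRing R] [Ring A] [Bialgebra R A]
    {ι : Sort*} {f : A →ₐc[R] A} {μ : ι → R} {n : ℕ} (hμ : ∀ i, μ i ^ n = 1)
    (hspan : ⨆ i, Module.End.eigenspace (f : A →ₗ[R] A) (μ i) = ⊤) : f ^ n = 1 := by
  have one_eq_pow : (1 : Module.End R A) = (f : Module.End R A) ^ n :=
    eq_pow_of_iSup_eigenspace_eq_top hspan fun i x _ => by
      rw [hμ, one_smul, Module.End.one_apply]
  exact BialgHom.coe_linearMap_injective ((bialgHom_toLinearMap_pow f n).trans one_eq_pow.symm)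

theorem sqrt_bialgebra_automorphism_odd_general [CommRing R] [Ring A] [Bialgebra R A]
    {ι : Sort*} (D : A →ₐc[R] A) {m : ℕ} (hm : Odd m) {μ ν : ι → R} (hν : ∀ i, ν i ^ m = 1)
    (hνμ : ∀ i, ν i ^ 2 = μ i) (hspan : ⨆ i, Module.End.eigenspace (D : A →ₗ[R] A) (μ i) = ⊤)
    (σ : A →ₗ[R] A)
    (hσ : ∀ i, ∀ x ∈ Module.End.eigenspace (D : A →ₗ[R] A) (μ i), σ x = ν i • x) :
    ∃ σ' : A ≃ₐc[R] A, (∀ x : A, σ' x = σ x) ∧ ∀ x : A, σ (σ x) = D x := by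
  obtain ⟨t, rfl⟩ := hm
  have hDm : D ^ (2 * t + 1) = 1 :=
    bialgHom_pow_eq_one_of_iSup_eigenspace_eq_top
      (fun i => by rw [← hνμ, pow_right_comm, hν, one_pow]) hspan
  have hμν (i : ι) : μ i ^ (t + 1) = ν i := by
    rw [← hνμ, ← pow_mul, show 2 * (t + 1) = 2 * t + 1 + 1 by ring, pow_succ, hν, one_mul]
  have hσD : σ = (D ^ (t + 1) : A →ₐc[R] A) := by
    rw [bialgHom_toLinearMap_pow]
    exact eq_pow_of_iSup_eigenspace_eq_top hspan fun i x hx => by rw [hμν, hσ i x hx]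
  have hsq : D ^ (t + 1) * D ^ (t + 1) = D := by
    rw [← pow_add, show t + 1 + (t + 1) = 2 * t + 1 + 1 by ring, pow_succ, hDm, one_mul]
  obtain ⟨σ', hσ'⟩ := exists_bialgEquiv_of_isUnit
    ((IsUnit.of_pow_eq_one hDm (Nat.succ_ne_zero _)).pow (t + 1))
  subst hσD
  exact ⟨σ', BialgHom.congr_fun hσ', BialgHom.congr_fun hsq⟩

end Bialgebra

/-- Let `D` be a bialgebra automorphism of a Hopf algebra `H` over a
field `k` with `D ^ m = id`, `m` odd, `q` a primitive `m`-th root of unity and `r` of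
order `m` with `r² = q`.  If `H` is the direct sum of the eigenspaces `E_{D,q^i}`, then
the linear map `σ` acting by `r^i` on `E_{D,q^i}` is a bialgebra automorphism of `H`
with `σ ∘ σ = D`. -/
theorem sqrt_bialgebra_automorphism_odd
    (k H : Type*) [Field k] [Ring H] [HopfAlgebra k H]
    (D : H →ₗ[k] H) (hbij : Function.Bijective D)
    (hD1 : D 1 = 1) (hDmul : ∀ x y : H, D (x * y) = D x * D y)
    (hDcounit : ∀ x : H, counit (R := k) (D x) = counit (R := k) x)
    (hDcomul : ∀ x : H, comul (R := k) (D x) = TensorProduct.map D D (comul (R := k) x))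
    (m : ℕ) (hmodd : Odd m) (hDm : (D ^ m : Module.End k H) = 1)
    (q : k) (hq : IsPrimitiveRoot q m)
    (r : k) (hr : IsPrimitiveRoot r m) (hrq : r ^ 2 = q)
    (hinternal : DirectSum.IsInternal
      (fun i : Fin m => Module.End.eigenspace D (q ^ (i : ℕ))))
    (σ : H →ₗ[k] H)
    (hσ : ∀ i < m, ∀ x ∈ Module.End.eigenspace D (q ^ i), σ x = r ^ i • x) :
    ∃ σ' : H ≃ₐc[k] H, (∀ x : H, σ' x = σ x) ∧ (∀ x : H, σ (σ x) = D x) := by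
  exact sqrt_bialgebra_automorphism_odd_general (bialgHomOfLinearMap D hD1 hDmul hDcounit hDcomul)
    hmodd (fun i : Fin m => by rw [pow_right_comm, hr.pow_eq_one, one_pow])
    (fun i => by rw [pow_right_comm, hrq]) hinternal.submodule_iSup_eq_top σ fun i => hσ i i.2
end

section
/- Let H be a Hopf algebra over a field k with comultiplication Δ and counit ε, let D : H → H be a bialgebra automorphism with D^m = id where m is even, let q ∈ k be a primitive m-th root of unity and r ∈ k an element of multiplicative order 2m with r² = q. Suppose H is the direct sum of the eigenspaces E_{D,q^i}, 0 ≤ i ≤ m-1, and let σ : H → H be the k-linear map acting as multiplication by r^i on E_{D,q^i}. Then σ ∘ σ = D, and σ is a bialgebra automorphism of H if and only if: (a) E_{D,q^i} · E_{D,q^j} = 0 for all i, j with m ≤ i + j ≤ 2m-2, and (b) for every i, Δ(E_{D,q^i}) is contained in the sum of the subspaces E_{D,q^a} ⊗ E_{D,q^b} over pairs a + b = i. -/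
open Coalgebra HopfAlgebra TensorProduct

variable {k H : Type*}

/-- For submodules `U V` of `H`, the image of `U ⊗[k] V` in `H ⊗[k] H`. -/
noncomputable def Submodule.tmul [Field k] [AddCommGroup H] [Module k H]
    (U V : Submodule k H) : Submodule k (TensorProduct k H H) :=
  LinearMap.range (TensorProduct.mapIncl U V)

/-!
`σ` is diagonalizable with eigenvalues `r ^ i` for `i < m`, so `σ ⊗ σ` is diagonalizable on `H ⊗ H`,
acting on `E_i ⊗ E_j` by `r ^ (i + j)`. A linear map intertwines two diagonalizable endomorphisms
exactly when it sends eigenvectors to eigenvectors for the same eigenvalue, and the two conditions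
express this for the multiplication and the comultiplication: since `r` has order `2 * m`,
`r ^ (i + j)` determines `i + j < 2 * m`, whereas `D` only sees `i + j` modulo `m`. A bijection
respecting the multiplication and the comultiplication automatically fixes the unit and the counit.
-/

section

variable {R ι κ V V' : Type*} [CommRing R] [AddCommGroup V] [Module R V] [AddCommGroup V']
  [Module R V']

/-- The subspaces `W i` span `V`, and the endomorphism `f` acts on each `W i` as the scalar `μ i`.
The sum of the `W i` need not be direct and the scalars `μ i` need not be distinct, so that the
notion passes to products of operators and to tensor products. -/
structure Eigenspanning (f : Module.End R V) (μ : ι → R) (W : ι → Submodule R V) : Prop where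
  le_eigenspace : ∀ i, W i ≤ f.eigenspace (μ i)
  iSup_eq_top : ⨆ i, W i = ⊤

namespace Eigenspanning

variable {f : Module.End R V} {g : Module.End R V'} {μ : ι → R} {ν : κ → R}
  {W : ι → Submodule R V} {W' : κ → Submodule R V'}

theorem comp_eq_comp_iff (hf : Eigenspanning f μ W) (g : Module.End R V') (φ : V →ₗ[R] V') :
    φ ∘ₗ f = g ∘ₗ φ ↔ ∀ i, (W i).map φ ≤ g.eigenspace (μ i) := by
  have hfW {i : ι} {x : V} (hx : x ∈ W i) : f x = μ i • x :=
    Module.End.mem_eigenspace_iff.1 (hf.le_eigenspace i hx)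
  simp only [Submodule.map_le_iff_le_comap]
  constructor
  · intro h i x hx
    rw [Submodule.mem_comap, Module.End.mem_eigenspace_iff, ← LinearMap.comp_apply, ← h,
      LinearMap.comp_apply, hfW hx, map_smul]
  · intro h
    rw [← LinearMap.eqLocus_eq_top, eq_top_iff, ← hf.iSup_eq_top]
    refine iSup_le fun i x hx => ?_
    rw [LinearMap.mem_eqLocus, LinearMap.comp_apply, hfW hx, map_smul]
    exact (Module.End.mem_eigenspace_iff.1 (h i hx)).symm

theorem eq {f' : Module.End R V} (hf : Eigenspanning f μ W) (hf' : Eigenspanning f' μ W) :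
    f = f' :=
  (hf.comp_eq_comp_iff f' LinearMap.id).2 fun i => by
    rw [Submodule.map_id]
    exact hf'.le_eigenspace i

theorem mul {f' : Module.End R V} {μ' : ι → R} (hf : Eigenspanning f μ W)
    (hf' : Eigenspanning f' μ' W) : Eigenspanning (f * f') (fun i => μ i * μ' i) W where
  le_eigenspace i x hx := by
    rw [Module.End.mem_eigenspace_iff, Module.End.mul_apply,
      Module.End.mem_eigenspace_iff.1 (hf'.le_eigenspace i hx), map_smul,
      Module.End.mem_eigenspace_iff.1 (hf.le_eigenspace i hx), smul_smul, mul_comm]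
  iSup_eq_top := hf.iSup_eq_top

theorem tensorProductMap (hf : Eigenspanning f μ W) (hg : Eigenspanning g ν W') :
    Eigenspanning (TensorProduct.map f g) (fun p : ι × κ => μ p.1 * ν p.2)
      (fun p => LinearMap.range (TensorProduct.mapIncl (W p.1) (W' p.2))) where
  le_eigenspace p := by
    rw [TensorProduct.range_mapIncl, Submodule.map₂_le]
    intro x hx y hy
    rw [Module.End.mem_eigenspace_iff, TensorProduct.mk_apply, TensorProduct.map_tmul,
      Module.End.mem_eigenspace_iff.1 (hf.le_eigenspace p.1 hx),
      Module.End.mem_eigenspace_iff.1 (hg.le_eigenspace p.2 hy), TensorProduct.smul_tmul_smul]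
  iSup_eq_top := by
    simp_rw [TensorProduct.range_mapIncl, iSup_prod, ← Submodule.map₂_iSup_right,
      ← Submodule.map₂_iSup_left, hf.iSup_eq_top, hg.iSup_eq_top,
      TensorProduct.map₂_mk_top_top_eq_top]

theorem eigenspace_eq_iSup [IsDomain R] [Module.IsTorsionFree R V] (hf : Eigenspanning f μ W)
    (c : R) : f.eigenspace c = ⨆ (i) (_ : μ i = c), W i := by
  have hle : (fun c => ⨆ (i) (_ : μ i = c), W i) ≤ f.eigenspace := fun c =>
    iSup₂_le fun i hi => hi ▸ hf.le_eigenspace i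
  have htop : ⨆ c, ⨆ (i) (_ : μ i = c), W i = ⊤ := by
    rw [iSup_comm]
    simpa only [iSup_iSup_eq_right] using hf.iSup_eq_top
  exact (congrFun ((f.eigenspaces_iSupIndep.le_iff_eq_of_iSup_eq_top htop).1 hle) c).symm

theorem bijective {k : Type*} [Field k] [Module k V] {f : Module.End k V} {μ : ι → k}
    {W : ι → Submodule k V} (hf : Eigenspanning f μ W) (hμ : ∀ i, μ i ≠ 0) :
    Function.Bijective f := by
  constructor
  · rw [← LinearMap.ker_eq_bot, ← Module.End.eigenspace_zero, hf.eigenspace_eq_iSup]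
    simp only [hμ, iSup_false, iSup_bot]
  · rw [← LinearMap.range_eq_top, eq_top_iff, ← hf.iSup_eq_top]
    refine iSup_le fun i x hx => ⟨(μ i)⁻¹ • x, ?_⟩
    rw [map_smul, Module.End.mem_eigenspace_iff.1 (hf.le_eigenspace i hx), inv_smul_smul₀ (hμ i)]

theorem map_mul_iff {A : Type*} [Ring A] [Algebra R A] {f : Module.End R A}
    {W : ι → Submodule R A} (hf : Eigenspanning f μ W) :
    (∀ x y, f (x * y) = f x * f y) ↔ ∀ i j, W i * W j ≤ f.eigenspace (μ i * μ j) := by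
  have hmap (i j : ι) : (LinearMap.range (TensorProduct.mapIncl (W i) (W j))).map
      (LinearMap.mul' R A) = W i * W j := by
    rw [TensorProduct.range_mapIncl, Submodule.map_map₂, Submodule.mul_eq_map₂]
    rfl
  have hcomp := (hf.tensorProductMap hf).comp_eq_comp_iff f (LinearMap.mul' R A)
  simp only [hmap, Prod.forall] at hcomp
  rw [← hcomp]
  exact ⟨fun h => TensorProduct.ext' fun x y => (h x y).symm,
    fun h x y => (LinearMap.congr_fun h (x ⊗ₜ[R] y)).symm⟩

end Eigenspanning

end

theorem eigenspace_mul_eigenspace_le {R A : Type*} [CommRing R] [Ring A] [Algebra R A]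
    {f : Module.End R A} (hf : ∀ x y, f (x * y) = f x * f y) (a b : R) :
    f.eigenspace a * f.eigenspace b ≤ f.eigenspace (a * b) := by
  rw [Submodule.mul_le]
  intro x hx y hy
  rw [Module.End.mem_eigenspace_iff] at hx hy ⊢
  rw [hf, hx, hy, smul_mul_smul_comm]

theorem map_one_of_surjective_of_map_mul {M N : Type*} [MulOneClass M] [MulOneClass N] {f : M → N}
    (hf : Function.Surjective f) (hmul : ∀ x y, f (x * y) = f x * f y) : f 1 = 1 := by
  obtain ⟨e, he⟩ := hf 1
  calc f 1 = f 1 * f e := by rw [he, mul_one]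
    _ = 1 := by rw [← hmul, one_mul, he]

theorem counit_map_of_injective_of_comul_map {R C : Type*} [CommSemiring R] [AddCommMonoid C]
    [Module R C] [Coalgebra R C] {f : C →ₗ[R] C} (hf : Function.Injective f)
    (hcomul : ∀ x, comul (R := R) (f x) = TensorProduct.map f f (comul x)) (x : C) :
    counit (R := R) (f x) = counit (R := R) x := by
  have hleft : (counit ∘ₗ f).rTensor C (comul (R := R) x) = (1 : R) ⊗ₜ[R] x := by
    apply Module.Flat.lTensor_preserves_injective_linearMap (M := R) f hf
    calc f.lTensor R ((counit ∘ₗ f).rTensor C (comul (R := R) x))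
        = counit.rTensor C (TensorProduct.map f f (comul (R := R) x)) := by
          rw [← LinearMap.comp_apply, LinearMap.lTensor_comp_rTensor,
            ← LinearMap.comp_apply (counit.rTensor C), LinearMap.rTensor_comp_map]
      _ = f.lTensor R ((1 : R) ⊗ₜ[R] x) := by
          rw [← hcomul, rTensor_counit_comul, LinearMap.lTensor_tmul]
  have hswap : counit (R := R) (f x) ⊗ₜ[R] (1 : R) = (1 : R) ⊗ₜ[R] counit (R := R) x := by
    calc counit (R := R) (f x) ⊗ₜ[R] (1 : R)
        = (counit ∘ₗ f).rTensor R (counit.lTensor C (comul (R := R) x)) := by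
          rw [lTensor_counit_comul, LinearMap.rTensor_tmul, LinearMap.comp_apply]
      _ = counit.lTensor R ((counit ∘ₗ f).rTensor C (comul (R := R) x)) := by
          rw [← LinearMap.comp_apply, LinearMap.rTensor_comp_lTensor,
            ← LinearMap.comp_apply (counit.lTensor R), LinearMap.lTensor_comp_rTensor]
      _ = (1 : R) ⊗ₜ[R] counit (R := R) x := by rw [hleft, LinearMap.lTensor_tmul]
  simpa using congrArg (TensorProduct.lid R R) hswap

section SquareRoot

variable [Field k] {m : ℕ} {q r : k}

theorem map_comul_iff_map_comul_le_iSup_tmul [AddCommGroup H] [Module k H] [Coalgebra k H]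
    (hr : IsPrimitiveRoot r (2 * m)) {σ : Module.End k H} {W : Fin m → Submodule k H}
    (hσ : Eigenspanning σ (fun i : Fin m => r ^ (i : ℕ)) W) :
    (∀ x, comul (R := k) (σ x) = TensorProduct.map σ σ (comul (R := k) x)) ↔
      ∀ i : Fin m, (W i).map (comul (R := k)) ≤
        ⨆ (p : Fin m × Fin m) (_ : (p.1 : ℕ) + (p.2 : ℕ) = i),
          Submodule.tmul (W p.1) (W p.2) := by
  have hpow (i : Fin m) (p : Fin m × Fin m) :
      r ^ (p.1 : ℕ) * r ^ (p.2 : ℕ) = r ^ (i : ℕ) ↔ (p.1 : ℕ) + (p.2 : ℕ) = i := by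
    rw [← pow_add]
    exact ⟨hr.pow_inj (by omega) (by omega), congrArg (r ^ ·)⟩
  have hcomp := hσ.comp_eq_comp_iff (TensorProduct.map σ σ) comul
  simp only [(hσ.tensorProductMap hσ).eigenspace_eq_iSup, hpow] at hcomp
  exact LinearMap.ext_iff.symm.trans hcomp

theorem map_mul_iff_eigenspace_mul_eigenspace_eq_bot [Ring H] [Algebra k H]
    (hr : IsPrimitiveRoot r (2 * m)) (hrq : r ^ 2 = q) {D σ : Module.End k H}
    (hD : ∀ x y, D (x * y) = D x * D y)
    (hσ : Eigenspanning σ (fun i : Fin m => r ^ (i : ℕ))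
      (fun i => D.eigenspace (q ^ (i : ℕ)))) :
    (∀ x y, σ (x * y) = σ x * σ y) ↔ ∀ i j, i < m → j < m → m ≤ i + j →
      D.eigenspace (q ^ i) * D.eigenspace (q ^ j) = ⊥ := by
  have hmul_le (i j : ℕ) :
      D.eigenspace (q ^ i) * D.eigenspace (q ^ j) ≤ D.eigenspace (q ^ (i + j)) := by
    rw [pow_add]
    exact eigenspace_mul_eigenspace_le hD _ _
  have hle_σ {l : ℕ} (hl : l < m) : D.eigenspace (q ^ l) ≤ σ.eigenspace (r ^ l) :=
    hσ.le_eigenspace ⟨l, hl⟩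
  rw [hσ.map_mul_iff]
  simp only [← pow_add]
  constructor
  · intro h i j hi hj hij
    obtain ⟨l, hl⟩ := Nat.exists_eq_add_of_le hij
    have hqm : q ^ m = 1 := by rw [← hrq, ← pow_mul, hr.pow_eq_one]
    have hwrap : D.eigenspace (q ^ i) * D.eigenspace (q ^ j) ≤ σ.eigenspace (r ^ l) := by
      have hmod := hmul_le i j
      rw [hl, pow_add, hqm, one_mul] at hmod
      exact hmod.trans (hle_σ (by omega))
    have hne : r ^ (i + j) ≠ r ^ l := fun hpow =>
      absurd (hr.pow_inj (by omega) (by omega) hpow) (by omega)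
    exact le_bot_iff.1
      (σ.eigenspaces_iSupIndep.pairwiseDisjoint hne (h ⟨i, hi⟩ ⟨j, hj⟩) hwrap)
  · intro h i j
    rcases lt_or_ge ((i : ℕ) + j) m with hij | hij
    · exact (hmul_le i j).trans (hle_σ hij)
    · rw [h i j i.2 j.2 hij]
      exact bot_le

end SquareRoot

theorem sqrt_bialgebra_automorphism_even_iff_general
    [Field k] [Ring H] [Algebra k H] [Coalgebra k H]
    (D : H →ₗ[k] H) (hDmul : ∀ x y : H, D (x * y) = D x * D y) (m : ℕ)
    (q r : k) (hr : IsPrimitiveRoot r (2 * m)) (hrq : r ^ 2 = q)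
    (hspan : ⨆ i : Fin m, Module.End.eigenspace D (q ^ (i : ℕ)) = ⊤)
    (σ : H →ₗ[k] H)
    (hσ : ∀ i < m, ∀ x ∈ Module.End.eigenspace D (q ^ i), σ x = r ^ i • x) :
    (∀ x : H, σ (σ x) = D x) ∧
    ((Function.Bijective σ ∧ σ 1 = 1 ∧ (∀ x y : H, σ (x * y) = σ x * σ y) ∧
      (∀ x : H, counit (R := k) (σ x) = counit (R := k) x) ∧
      (∀ x : H, comul (R := k) (σ x) = TensorProduct.map σ σ (comul (R := k) x))) ↔
      ((∀ i j : ℕ, i < m → j < m → m ≤ i + j →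
          Module.End.eigenspace D (q ^ i) * Module.End.eigenspace D (q ^ j) = ⊥) ∧
       (∀ i : ℕ, i < m →
          Submodule.map (comul (R := k)) (Module.End.eigenspace D (q ^ i)) ≤
            ⨆ (p : Fin m × Fin m) (_ : (p.1 : ℕ) + (p.2 : ℕ) = i),
              Submodule.tmul (Module.End.eigenspace D (q ^ (p.1 : ℕ)))
                (Module.End.eigenspace D (q ^ (p.2 : ℕ)))))) := by
  have hspanσ : Eigenspanning σ (fun i : Fin m => r ^ (i : ℕ))
      (fun i => Module.End.eigenspace D (q ^ (i : ℕ))) :=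
    ⟨fun i x hx => Module.End.mem_eigenspace_iff.2 (hσ i i.2 x hx), hspan⟩
  have hspanD : Eigenspanning D (fun i : Fin m => r ^ (i : ℕ) * r ^ (i : ℕ))
      (fun i => Module.End.eigenspace D (q ^ (i : ℕ))) :=
    ⟨fun i => by rw [← mul_pow, ← sq, hrq], hspan⟩
  have hbij : Function.Bijective σ :=
    hspanσ.bijective fun i => pow_ne_zero _ (hr.ne_zero (mul_ne_zero two_ne_zero i.pos.ne'))
  have hmul_iff := map_mul_iff_eigenspace_mul_eigenspace_eq_bot hr hrq hDmul hspanσ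
  have hcomul_iff := (map_comul_iff_map_comul_le_iSup_tmul hr hspanσ).trans Fin.forall_iff
  refine ⟨LinearMap.congr_fun ((hspanσ.mul hspanσ).eq hspanD), ?_⟩
  rw [← hmul_iff, ← hcomul_iff]
  exact ⟨fun ⟨_, _, hmul, _, hcomul⟩ => ⟨hmul, hcomul⟩, fun ⟨hmul, hcomul⟩ =>
    ⟨hbij, map_one_of_surjective_of_map_mul hbij.surjective hmul, hmul,
      counit_map_of_injective_of_comul_map hbij.injective hcomul, hcomul⟩⟩

/-- Let `D` be a bialgebra automorphism of a Hopf algebra `H` over a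
field `k` with `D ^ m = id`, `m` even, `q` a primitive `m`-th root of unity and `r` of
order `2m` with `r² = q`.  If `H` is the direct sum of the eigenspaces `E_{D,q^i}` and `σ`
is the linear map acting by `r^i` on `E_{D,q^i}`, then `σ ∘ σ = D`, and `σ` is a bialgebra
automorphism of `H` iff `E_{D,q^i}·E_{D,q^j} = 0` whenever `m ≤ i + j ≤ 2m-2` and
`Δ(E_{D,q^i}) ⊆ ⨁_{a+b=i} E_{D,q^a} ⊗ E_{D,q^b}` for every `i`. -/
theorem sqrt_bialgebra_automorphism_even_iff
    [Field k] [Ring H] [HopfAlgebra k H]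
    (D : H →ₗ[k] H) (hbij : Function.Bijective D)
    (hD1 : D 1 = 1) (hDmul : ∀ x y : H, D (x * y) = D x * D y)
    (hDcounit : ∀ x : H, counit (R := k) (D x) = counit (R := k) x)
    (hDcomul : ∀ x : H, comul (R := k) (D x) = TensorProduct.map D D (comul (R := k) x))
    (m : ℕ) (hmeven : Even m) (hm : 0 < m) (hDm : (D ^ m : Module.End k H) = 1)
    (q : k) (hq : IsPrimitiveRoot q m)
    (r : k) (hr : IsPrimitiveRoot r (2 * m)) (hrq : r ^ 2 = q)
    (hinternal : DirectSum.IsInternal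
      (fun i : Fin m => Module.End.eigenspace D (q ^ (i : ℕ))))
    (σ : H →ₗ[k] H)
    (hσ : ∀ i < m, ∀ x ∈ Module.End.eigenspace D (q ^ i), σ x = r ^ i • x) :
    (∀ x : H, σ (σ x) = D x) ∧
    ((Function.Bijective σ ∧ σ 1 = 1 ∧ (∀ x y : H, σ (x * y) = σ x * σ y) ∧
      (∀ x : H, counit (R := k) (σ x) = counit (R := k) x) ∧
      (∀ x : H, comul (R := k) (σ x) = TensorProduct.map σ σ (comul (R := k) x))) ↔
      ((∀ i j : ℕ, i < m → j < m → m ≤ i + j →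
          Module.End.eigenspace D (q ^ i) * Module.End.eigenspace D (q ^ j) = ⊥) ∧
       (∀ i : ℕ, i < m →
          Submodule.map (comul (R := k)) (Module.End.eigenspace D (q ^ i)) ≤
            ⨆ (p : Fin m × Fin m) (_ : (p.1 : ℕ) + (p.2 : ℕ) = i),
              Submodule.tmul (Module.End.eigenspace D (q ^ (p.1 : ℕ)))
                (Module.End.eigenspace D (q ^ (p.2 : ℕ)))))) := by
  exact sqrt_bialgebra_automorphism_even_iff_general D hDmul m q r hr hrq
    hinternal.submodule_iSup_eq_top σ hσ
end
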